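/- Let C be an oriented curvature cone and R ∈ C. Then the operator R̃ ∈ S²_BΛ²ℝ⁴ defined by R̃η = P₊(Rη) for η ∈ Λ²₊ and R̃ζ = (scal(R)/12)·ζ for ζ ∈ Λ²₋ (that is, R̃ = R_Id + R_{W₊}, the sum of the identity component and the self-dual Weyl component of R) also belongs to C. -/

import Mathlib

noncomputable section

open scoped ComplexConjugate

/-- `ℝ⁴` with its standard basis. -/
abbrev V4 := Fin 4 → ℝ
/-- `Λ²ℝ⁴` in the coordinates given by the basis
`e₁∧e₂, e₁∧e₃, e₁∧e₄, e₂∧e₃, e₂∧e₄, e₃∧e₄` (0-indexed). -/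
abbrev L6 := Fin 6 → ℝ
/-- Endomorphisms of `Λ²ℝ⁴`, as `6×6` matrices. -/
abbrev M6 := Fin 6 → Fin 6 → ℝ

/-- standard basis of ℝ⁴ -/
def std4 (i : Fin 4) : V4 := fun j => if j = i then 1 else 0

/-- the standard inner product of ℝ⁴ -/
def ip4 (x y : V4) : ℝ := ∑ i, x i * y i

/-- the index pairs for the basis of Λ²ℝ⁴ -/
def pr : Fin 6 → Fin 4 × Fin 4 := ![(0,1),(0,2),(0,3),(1,2),(1,3),(2,3)]

/-- the wedge product `x ∧ y` of two vectors, in coordinates.  With this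
coordinate expression, the standard inner product `ip6` below satisfies
`⟨x∧y, z∧t⟩ = ⟨x,z⟩⟨y,t⟩ − ⟨x,t⟩⟨y,z⟩`. -/
def wedge (x y : V4) : L6 := fun k => x (pr k).1 * y (pr k).2 - x (pr k).2 * y (pr k).1

/-- the inner product of Λ²ℝ⁴ -/
def ip6 (a b : L6) : ℝ := ∑ k, a k * b k

/-- The Hodge star operator on Λ²ℝ⁴. -/
def hodge (w : L6) : L6 := ![w 5, -(w 4), w 3, w 2, -(w 1), w 0]

/-- self-dual 2-forms (the +1 eigenspace Λ²₊ of the Hodge star) -/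
def SelfDual (w : L6) : Prop := hodge w = w
/-- anti-self-dual 2-forms (the −1 eigenspace Λ²₋ of the Hodge star) -/
def AntiSelfDual (w : L6) : Prop := hodge w = -w

/-- application of an endomorphism (matrix) of Λ²ℝ⁴ to a 2-form -/
def appM (A : M6) (w : L6) : L6 := fun k => ∑ l, A k l * w l

/-- symmetry of an endomorphism of Λ²ℝ⁴ w.r.t. the inner product -/
def IsSymm6 (A : M6) : Prop := ∀ a b : L6, ip6 (appM A a) b = ip6 a (appM A b)

/-- the first Bianchi identity -/
def Bianchi (A : M6) : Prop := ∀ x y z t : V4,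
  ip6 (appM A (wedge x y)) (wedge z t) + ip6 (appM A (wedge z x)) (wedge y t)
    + ip6 (appM A (wedge y z)) (wedge x t) = 0

/-- algebraic curvature operators on ℝ⁴ : symmetric endomorphisms of Λ²ℝ⁴
satisfying the first Bianchi identity.  The set of these is `S²_BΛ²ℝ⁴`. -/
def IsCurvOp (A : M6) : Prop := IsSymm6 A ∧ Bianchi A

/-- the scalar curvature: twice the trace -/
def scal (A : M6) : ℝ := 2 * ∑ k, A k k

/-- orthogonal projection P₊ of Λ²ℝ⁴ onto Λ²₊ -/
def pplus (w : L6) : L6 := (1/2 : ℝ) • (w + hodge w)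

/-- the self-dual Weyl part W₊ of a curvature operator, as a map on Λ²₊:
`W₊η = P₊(Rη) − (scal(R)/12)·η`. -/
def Wplus (A : M6) (η : L6) : L6 := pplus (appM A η) - (scal A / 12) • η

/-- `R` is PIC₊ : the quadratic form `η ↦ ⟨Rη,η⟩` on Λ²₊ is 2-positive. -/
def PICp (A : M6) : Prop := ∀ η ζ : L6, SelfDual η → SelfDual ζ →
  ip6 η η = 1 → ip6 ζ ζ = 1 → ip6 η ζ = 0 →
  0 < ip6 (appM A η) η + ip6 (appM A ζ) ζ

/-- `R` is NNIC₊ : the quadratic form `η ↦ ⟨Rη,η⟩` on Λ²₊ is 2-nonnegative. -/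
def NNICp (A : M6) : Prop := ∀ η ζ : L6, SelfDual η → SelfDual ζ →
  ip6 η η = 1 → ip6 ζ ζ = 1 → ip6 η ζ = 0 →
  0 ≤ ip6 (appM A η) η + ip6 (appM A ζ) ζ

/-- `R` is PIC₋ : the quadratic form `η ↦ ⟨Rη,η⟩` on Λ²₋ is 2-positive. -/
def PICm (A : M6) : Prop := ∀ η ζ : L6, AntiSelfDual η → AntiSelfDual ζ →
  ip6 η η = 1 → ip6 ζ ζ = 1 → ip6 η ζ = 0 →
  0 < ip6 (appM A η) η + ip6 (appM A ζ) ζ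

/-- `R` is NNIC₋ : the quadratic form `η ↦ ⟨Rη,η⟩` on Λ²₋ is 2-nonnegative. -/
def NNICm (A : M6) : Prop := ∀ η ζ : L6, AntiSelfDual η → AntiSelfDual ζ →
  ip6 η η = 1 → ip6 ζ ζ = 1 → ip6 η ζ = 0 →
  0 ≤ ip6 (appM A η) η + ip6 (appM A ζ) ζ

/- ### complexifications -/

/-- `ℂ⁴` -/
abbrev VC4 := Fin 4 → ℂ
/-- `Λ²ℂ⁴` -/
abbrev LC6 := Fin 6 → ℂ

/-- the wedge product on ℂ⁴ -/
def wedgeC (x y : VC4) : LC6 := fun k => x (pr k).1 * y (pr k).2 - x (pr k).2 * y (pr k).1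

/-- the complex-bilinear extension of the inner product of ℝ⁴ -/
def bilC4 (x y : VC4) : ℂ := ∑ i, x i * y i

/-- the complex-bilinear extension of the inner product of Λ²ℝ⁴ -/
def bilC6 (a b : LC6) : ℂ := ∑ k, a k * b k

/-- the Hermitian inner product `⟨·,·⟩_h` on Λ²ℂ⁴ associated to the real inner
product on Λ²ℝ⁴ -/
def hermC6 (a b : LC6) : ℂ := ∑ k, a k * conj (b k)

/-- the complex-linear extension of an endomorphism of Λ²ℝ⁴ to Λ²ℂ⁴ -/
def appMC (A : M6) (w : LC6) : LC6 := fun k => ∑ l, (A k l : ℂ) * w l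

/-- the complex-linear extension of the Hodge star -/
def hodgeC (w : LC6) : LC6 := ![w 5, -(w 4), w 3, w 2, -(w 1), w 0]

/-- membership in `Λ²₊ ⊗ ℂ` -/
def SelfDualC (w : LC6) : Prop := hodgeC w = w



/- ### the quadratic quantity Q(R) = R² + R^# and related notions -/

/-- product of endomorphisms of Λ²ℝ⁴ (matrix product) -/
def mm (A B : M6) : M6 := fun k l => ∑ j, A k j * B j l

/-- the antisymmetric array of coefficients of a 2-form: `ext2 w a b = w_{ab}` -/
def ext2 (w : L6) (a b : Fin 4) : ℝ :=
  ∑ k, w k * ((if (pr k).1 = a ∧ (pr k).2 = b then (1:ℝ) else 0)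
    - (if (pr k).1 = b ∧ (pr k).2 = a then (1:ℝ) else 0))

/-- the skew-symmetric matrix `φ(w)` associated to a 2-form `w` under the
identification `x∧y ↦ (u ↦ ⟨x,u⟩y − ⟨y,u⟩x)` of `Λ²ℝ⁴` with `𝔰𝔬(4)` -/
def toSkew (w : L6) : Fin 4 → Fin 4 → ℝ := fun a b => ext2 w b a

/-- the Lie bracket on Λ²ℝ⁴ obtained by transporting the commutator of
matrices through the identification `Λ²ℝ⁴ ≃ 𝔰𝔬(4)` above -/
def bracket (u v : L6) : L6 :=
  fun k => ∑ c, (toSkew u (pr k).2 c * toSkew v c (pr k).1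
    - toSkew v (pr k).2 c * toSkew u c (pr k).1)

/-- the standard (orthonormal) basis of Λ²ℝ⁴ -/
def std6 (k : Fin 6) : L6 := fun l => if l = k then 1 else 0

/-- the quadratic form of `R^#` :
`η ↦ −(1/2) Σᵢ ⟨[η, R([η, Rωᵢ])], ωᵢ⟩` for the orthonormal basis `(ωᵢ)` of Λ²ℝ⁴. -/
def sharpQ (A : M6) (η : L6) : ℝ :=
  -(1/2 : ℝ) * ∑ i, ip6 (bracket η (appM A (bracket η (appM A (std6 i))))) (std6 i)

/-- `R^#`, the symmetric endomorphism of Λ²ℝ⁴ determined by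
`⟨R^#η, η⟩ = sharpQ R η` (obtained by polarization). -/
def sharp (A : M6) : M6 :=
  fun k l => (sharpQ A (std6 k + std6 l) - sharpQ A (std6 k) - sharpQ A (std6 l)) / 2

/-- `Q(R) = R² + R^#` -/
def Qop (A : M6) : M6 := mm A A + sharp A

/-- the identity endomorphism of Λ²ℝ⁴ -/
def idM6 : M6 := fun k l => if k = l then 1 else 0

/-- the Ricci endomorphism `ρ(R)` of a curvature operator, as a matrix:
`⟨ρ(R)x, y⟩ = Σᵢ ⟨R(x∧eᵢ), y∧eᵢ⟩`. -/
def ricci (A : M6) : Fin 4 → Fin 4 → ℝ :=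
  fun a b => ∑ i, ip6 (appM A (wedge (std4 a) (std4 i))) (wedge (std4 b) (std4 i))

/-- An oriented curvature cone: a closed convex cone in `S²_BΛ²ℝ⁴` which is
invariant under the `SO(4)`-action `⟨(g·R)(x∧y), z∧t⟩ = ⟨R(gx∧gy), gz∧gt⟩`
(expressed below by the characterizing property of `B = g·A`) and contains
the identity in its interior relative to `S²_BΛ²ℝ⁴`. -/
structure OrientedCurvatureCone where
  /-- the underlying set of algebraic curvature operators -/
  carrier : Set M6
  subset_curvOp : ∀ A ∈ carrier, IsCurvOp A
  closed : IsClosed carrier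
  convex : Convex ℝ carrier
  cone : ∀ (t : ℝ), 0 ≤ t → ∀ A ∈ carrier, t • A ∈ carrier
  so4_invariant : ∀ (g : Matrix (Fin 4) (Fin 4) ℝ),
    (∀ x y : V4, ip4 (g.mulVec x) (g.mulVec y) = ip4 x y) → g.det = 1 →
    ∀ A ∈ carrier, ∀ B : M6,
      (∀ x y z t : V4, ip6 (appM B (wedge x y)) (wedge z t)
        = ip6 (appM A (wedge (g.mulVec x) (g.mulVec y)))
            (wedge (g.mulVec z) (g.mulVec t))) →
      B ∈ carrier
  id_mem_interior : ∃ ε : ℝ, 0 < ε ∧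
    ∀ A : M6, IsCurvOp A → dist A idM6 < ε → A ∈ carrier

/-!
Right multiplication by unit quaternions is a copy of `SU(2)` in `SO(4)` which fixes `Λ²₊` pointwise
and acts on `Λ²₋ ≅ Im ℍ` through the double cover `SU(2) → SO(3)`. Averaging `R` over the
tetrahedral subgroup, which already acts irreducibly on `Λ²₋`, stays inside any convex invariant
set, leaves the `Λ²₊` block unchanged, kills the mixed blocks and turns the `Λ²₋` block into a
multiple of the identity. Since the Bianchi identity equates the traces of `R` over `Λ²₊` and `Λ²₋`,
that multiple is `scal(R) / 12`.
-/

open Quaternion Matrix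

section SelfDuality

theorem selfDual_iff {η : L6} : SelfDual η ↔ η 5 = η 0 ∧ η 4 = -η 1 ∧ η 3 = η 2 := by
  refine ⟨fun hη => ⟨congrFun hη 0, ?_, congrFun hη 2⟩, fun ⟨h₅, h₄, h₃⟩ => ?_⟩
  · exact neg_eq_iff_eq_neg.mp (congrFun hη 1)
  · ext k
    fin_cases k <;> simp [hodge, h₃, h₄, h₅]

theorem antiSelfDual_iff {ζ : L6} : AntiSelfDual ζ ↔ ζ 5 = -ζ 0 ∧ ζ 4 = ζ 1 ∧ ζ 3 = -ζ 2 := by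
  refine ⟨fun hζ => ⟨congrFun hζ 0, neg_injective (congrFun hζ 1), congrFun hζ 2⟩,
    fun ⟨h₅, h₄, h₃⟩ => ?_⟩
  ext k
  fin_cases k <;> simp [hodge, h₃, h₄, h₅]

theorem ip6_pplus (u v : L6) : ip6 (pplus u) v = ip6 u (pplus v) := by
  simp only [ip6, pplus, hodge, Pi.smul_apply, Pi.add_apply, smul_eq_mul, Fin.sum_univ_six]
  simp
  ring

theorem SelfDual.pplus_eq {η : L6} (hη : SelfDual η) : pplus η = η := by
  rw [pplus, hη, ← two_smul ℝ η, smul_smul]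
  norm_num

theorem AntiSelfDual.pplus_eq {ζ : L6} (hζ : AntiSelfDual ζ) : pplus ζ = 0 := by
  rw [pplus, hζ, add_neg_cancel, smul_zero]

theorem selfDual_pplus (w : L6) : SelfDual (pplus w) := by
  simp only [selfDual_iff, pplus, hodge, Pi.smul_apply, Pi.add_apply, smul_eq_mul]
  refine ⟨?_, ?_, ?_⟩ <;> simp <;> ring

theorem antiSelfDual_sub_pplus (w : L6) : AntiSelfDual (w - pplus w) := by
  simp only [antiSelfDual_iff, pplus, hodge, Pi.smul_apply, Pi.add_apply, Pi.sub_apply, smul_eq_mul]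
  refine ⟨?_, ?_, ?_⟩ <;> simp <;> ring

theorem AntiSelfDual.ip6_eq_zero {ζ η : L6} (hζ : AntiSelfDual ζ) (hη : SelfDual η) :
    ip6 ζ η = 0 := by
  rw [← hη.pplus_eq, ← ip6_pplus, hζ.pplus_eq]
  simp [ip6]

end SelfDuality

section CurvForm

/-- The bilinear form `(u, v) ↦ ⟨R u, v⟩` of an endomorphism `R` of `Λ²ℝ⁴`. The transpose is there
because `Matrix.toBilin'` lets the matrix act on the second argument. -/
def curvForm : M6 ≃ₗ[ℝ] LinearMap.BilinForm ℝ L6 :=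
  ofLinearEquiv ℝ ≪≫ₗ transposeLinearEquiv _ _ ℝ ℝ ≪≫ₗ Matrix.toBilin'

theorem curvForm_apply (A : M6) (u v : L6) : curvForm A u v = ip6 (appM A u) v := by
  change Matrix.toBilin' (of A)ᵀ u v = (of A *ᵥ u) ⬝ᵥ v
  rw [Matrix.toBilin'_apply', mulVec_transpose, dotProduct_comm, dotProduct_comm _ v,
    dotProduct_mulVec, dotProduct_comm]

/-- The second exterior power `Λ²g` of a `4 × 4` matrix `g`; its matrix consists of the `2 × 2`
minors of `g`. -/
def wedgeMap (g : Matrix (Fin 4) (Fin 4) ℝ) : L6 →ₗ[ℝ] L6 :=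
  Matrix.toLin' (of fun k l =>
    g (pr k).1 (pr l).1 * g (pr k).2 (pr l).2 - g (pr k).1 (pr l).2 * g (pr k).2 (pr l).1)

theorem wedgeMap_wedge (g : Matrix (Fin 4) (Fin 4) ℝ) (x y : V4) :
    wedgeMap g (wedge x y) = wedge (g *ᵥ x) (g *ᵥ y) := by
  ext k
  simp only [wedgeMap, toLin'_apply, mulVec, dotProduct, of_apply, wedge, Fin.sum_univ_six,
    Fin.sum_univ_four]
  simp [pr]
  ring

/-- The operator `g · R` characterized by `⟨(g · R) u, v⟩ = ⟨R (Λ²g u), Λ²g v⟩`. -/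
def curvPullback (g : Matrix (Fin 4) (Fin 4) ℝ) (A : M6) : M6 :=
  curvForm.symm ((curvForm A).comp (wedgeMap g) (wedgeMap g))

@[simp]
theorem curvForm_curvPullback (g : Matrix (Fin 4) (Fin 4) ℝ) (A : M6) (u v : L6) :
    curvForm (curvPullback g A) u v = curvForm A (wedgeMap g u) (wedgeMap g v) := by
  simp [curvPullback]

theorem OrientedCurvatureCone.curvPullback_mem (C : OrientedCurvatureCone)
    {g : Matrix (Fin 4) (Fin 4) ℝ} (hg : g ∈ specialOrthogonalGroup (Fin 4) ℝ)
    {A : M6} (hA : A ∈ C.carrier) : curvPullback g A ∈ C.carrier := by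
  obtain ⟨hg_orth, hg_det⟩ := mem_specialOrthogonalGroup_iff.mp hg
  refine C.so4_invariant g (fun x y => ?_) hg_det A hA _ fun x y z t => ?_
  · change (g *ᵥ x) ⬝ᵥ (g *ᵥ y) = x ⬝ᵥ y
    rw [dotProduct_mulVec, ← mulVec_transpose, mulVec_mulVec,
      (mem_orthogonalGroup_iff' (Fin 4) ℝ).mp hg_orth, one_mulVec]
  · rw [← curvForm_apply, ← curvForm_apply, curvForm_curvPullback, wedgeMap_wedge, wedgeMap_wedge]

end CurvForm

section RightMultiplication

/-- The matrix of right multiplication `x ↦ x * q` on `ℍ ≅ ℝ⁴` in the basis `1, i, j, k`. -/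
def quaternionRightMul (q : ℍ[ℝ]) : Matrix (Fin 4) (Fin 4) ℝ :=
  !![q.re, -q.imI, -q.imJ, -q.imK;
     q.imI, q.re, q.imK, -q.imJ;
     q.imJ, -q.imK, q.re, q.imI;
     q.imK, q.imJ, -q.imI, q.re]

theorem quaternionRightMul_mul_transpose (q : ℍ[ℝ]) :
    quaternionRightMul q * (quaternionRightMul q)ᵀ = normSq q • 1 := by
  ext i j
  fin_cases i <;> fin_cases j <;>
    simp [quaternionRightMul, mul_apply, Fin.sum_univ_four, normSq_def'] <;> ring

theorem det_quaternionRightMul (q : ℍ[ℝ]) : (quaternionRightMul q).det = normSq q ^ 2 := by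
  simp [quaternionRightMul, det_succ_row_zero, Fin.sum_univ_succ, Fin.succAbove, normSq_def']
  ring

theorem quaternionRightMul_mem_specialOrthogonalGroup {q : ℍ[ℝ]} (hq : normSq q = 1) :
    quaternionRightMul q ∈ specialOrthogonalGroup (Fin 4) ℝ := by
  rw [mem_specialOrthogonalGroup_iff, mem_orthogonalGroup_iff, quaternionRightMul_mul_transpose,
    det_quaternionRightMul, hq]
  simp

theorem wedgeMap_quaternionRightMul_of_selfDual (q : ℍ[ℝ]) {η : L6} (hη : SelfDual η) :
    wedgeMap (quaternionRightMul q) η = normSq q • η := by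
  obtain ⟨h₅, h₄, h₃⟩ := selfDual_iff.mp hη
  ext k
  fin_cases k <;>
    simp [wedgeMap, toLin'_apply, mulVec, dotProduct, pr, quaternionRightMul, Fin.sum_univ_six,
      normSq_def', h₃, h₄, h₅] <;> ring

/-- The identification `Im ℍ ≅ Λ²₋`, `v ↦ 1 ∧ v - *(1 ∧ v)`, extended by zero to the real
quaternions. -/
def antiSelfDualOfIm : ℍ[ℝ] →ₗ[ℝ] L6 where
  toFun v := ![v.imI, v.imJ, v.imK, -v.imK, v.imJ, -v.imI]
  map_add' v w := by
    ext k
    fin_cases k <;> simp [add_comm]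
  map_smul' c v := by
    ext k
    fin_cases k <;> simp

theorem antiSelfDual_antiSelfDualOfIm (v : ℍ[ℝ]) : AntiSelfDual (antiSelfDualOfIm v) := by
  simp [AntiSelfDual, antiSelfDualOfIm, hodge]

theorem wedgeMap_quaternionRightMul_antiSelfDualOfIm (q v : ℍ[ℝ]) :
    wedgeMap (quaternionRightMul q) (antiSelfDualOfIm v) =
      antiSelfDualOfIm (star q * v * q) := by
  ext k
  fin_cases k <;>
    simp [wedgeMap, toLin'_apply, mulVec, dotProduct, pr, quaternionRightMul, antiSelfDualOfIm,
      Fin.sum_univ_six] <;> ring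

/-- The imaginary quaternions `i, j, k`. -/
def imUnit (a : Fin 3) : ℍ[ℝ] := ⟨0, ![1, 0, 0] a, ![0, 1, 0] a, ![0, 0, 1] a⟩

theorem ip6_antiSelfDualOfIm_imUnit (a b : Fin 3) :
    ip6 (antiSelfDualOfIm (imUnit a)) (antiSelfDualOfIm (imUnit b)) = if a = b then 2 else 0 := by
  fin_cases a <;> fin_cases b <;>
    simp [ip6, antiSelfDualOfIm, imUnit, Fin.sum_univ_six] <;> norm_num

theorem AntiSelfDual.eq_sum {ζ : L6} (hζ : AntiSelfDual ζ) :
    ζ = ∑ a, ![ζ 0, ζ 1, ζ 2] a • antiSelfDualOfIm (imUnit a) := by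
  obtain ⟨h₅, h₄, h₃⟩ := antiSelfDual_iff.mp hζ
  ext k
  fin_cases k <;> simp [antiSelfDualOfIm, imUnit, Fin.sum_univ_three, h₃, h₄, h₅]

theorem span_selfDual_union_range_antiSelfDualOfIm :
    Submodule.span ℝ ({η | SelfDual η} ∪ Set.range (antiSelfDualOfIm ∘ imUnit)) = ⊤ := by
  refine eq_top_iff.mpr fun w _ => ?_
  rw [← add_sub_cancel (pplus w) w, (antiSelfDual_sub_pplus w).eq_sum]
  exact add_mem (Submodule.subset_span (.inl (selfDual_pplus w))) <| sum_mem fun a _ =>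
    Submodule.smul_mem _ _ (Submodule.subset_span (.inr ⟨a, rfl⟩))

theorem eq_of_curvForm_blocks_eq {A B : M6}
    (h_pp : ∀ η η', SelfDual η → SelfDual η' → curvForm A η η' = curvForm B η η')
    (h_pm : ∀ η a, SelfDual η → curvForm A η (antiSelfDualOfIm (imUnit a)) =
      curvForm B η (antiSelfDualOfIm (imUnit a)))
    (h_mp : ∀ a η, SelfDual η → curvForm A (antiSelfDualOfIm (imUnit a)) η =
      curvForm B (antiSelfDualOfIm (imUnit a)) η)
    (h_mm : ∀ a b, curvForm A (antiSelfDualOfIm (imUnit a)) (antiSelfDualOfIm (imUnit b)) =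
      curvForm B (antiSelfDualOfIm (imUnit a)) (antiSelfDualOfIm (imUnit b))) :
    A = B := by
  refine curvForm.injective <|
    LinearMap.ext_on span_selfDual_union_range_antiSelfDualOfIm fun u hu =>
      LinearMap.ext_on span_selfDual_union_range_antiSelfDualOfIm fun v hv => ?_
  rcases hu with hu | ⟨a, rfl⟩ <;> rcases hv with hv | ⟨b, rfl⟩
  · exact h_pp u v hu hv
  · exact h_pm u b hu
  · exact h_mp a v hv
  · exact h_mm a b

end RightMultiplication

section TetrahedralAverage

/-- The quaternions `1, i, j, k`. -/
def kleinUnit : Fin 4 → ℍ[ℝ] := vecCons 1 imUnit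

/-- The signs by which `1, i, j, k` act on `i, j, k` by conjugation. -/
def kleinSign : Matrix (Fin 4) (Fin 3) ℝ :=
  !![1, 1, 1; 1, -1, -1; -1, 1, -1; -1, -1, 1]

/-- The quaternions `1, ω, ω̄`, where conjugation by the Hurwitz unit `ω = (1 - i - j - k) / 2`
permutes `i, j, k` cyclically. -/
def cyclicUnit (n : Fin 3) : ℍ[ℝ] :=
  ⟨![1, 1 / 2, 1 / 2] n, ![0, -1 / 2, 1 / 2] n, ![0, -1 / 2, 1 / 2] n, ![0, -1 / 2, 1 / 2] n⟩

/-- Representatives modulo `±1` of the binary tetrahedral group of the 24 Hurwitz units. -/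
def tetrahedralUnit (p : Fin 4 × Fin 3) : ℍ[ℝ] :=
  kleinUnit p.1 * cyclicUnit p.2

theorem normSq_tetrahedralUnit (p : Fin 4 × Fin 3) : normSq (tetrahedralUnit p) = 1 := by
  have normSq_kleinUnit (m : Fin 4) : normSq (kleinUnit m) = 1 := by
    rw [normSq_def']
    fin_cases m <;> simp [kleinUnit, imUnit]
  have normSq_cyclicUnit (n : Fin 3) : normSq (cyclicUnit n) = 1 := by
    rw [normSq_def']
    fin_cases n <;> norm_num [cyclicUnit]
  rw [tetrahedralUnit, map_mul, normSq_kleinUnit, normSq_cyclicUnit, one_mul]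

theorem star_kleinUnit_mul_imUnit_mul (m : Fin 4) (a : Fin 3) :
    star (kleinUnit m) * imUnit a * kleinUnit m = kleinSign m a • imUnit a := by
  ext <;> simp only [re_mul, imI_mul, imJ_mul, imK_mul, re_star, imI_star, imJ_star, imK_star,
      re_smul, imI_smul, imJ_smul, imK_smul] <;>
    fin_cases m <;> fin_cases a <;> simp [kleinUnit, imUnit, kleinSign]

theorem star_cyclicUnit_mul_imUnit_mul (n a : Fin 3) :
    star (cyclicUnit n) * imUnit a * cyclicUnit n = imUnit (a + n) := by
  ext <;> simp only [re_mul, imI_mul, imJ_mul, imK_mul, re_star, imI_star, imJ_star, imK_star] <;>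
    fin_cases n <;> fin_cases a <;> simp [cyclicUnit, imUnit] <;> norm_num

theorem star_tetrahedralUnit_mul_imUnit_mul (m : Fin 4) (n a : Fin 3) :
    star (tetrahedralUnit (m, n)) * imUnit a * tetrahedralUnit (m, n) =
      kleinSign m a • imUnit (a + n) := by
  calc
    _ = star (cyclicUnit n) * (star (kleinUnit m) * imUnit a * kleinUnit m) * cyclicUnit n := by
      simp only [tetrahedralUnit, star_mul, mul_assoc]
    _ = kleinSign m a • (star (cyclicUnit n) * imUnit a * cyclicUnit n) := by
      rw [star_kleinUnit_mul_imUnit_mul, mul_smul_comm, smul_mul_assoc]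
    _ = kleinSign m a • imUnit (a + n) := by
      rw [star_cyclicUnit_mul_imUnit_mul]

theorem sum_kleinSign (a : Fin 3) : ∑ m, kleinSign m a = 0 := by
  fin_cases a <;> simp [kleinSign, Fin.sum_univ_four]

theorem sum_kleinSign_mul_kleinSign (a b : Fin 3) :
    ∑ m, kleinSign m a * kleinSign m b = if a = b then 4 else 0 := by
  fin_cases a <;> fin_cases b <;> simp [kleinSign, Fin.sum_univ_four] <;> norm_num

/-- The average of `R` over the action of the tetrahedral group by right multiplications. -/
def tetrahedralAverage (A : M6) : M6 :=
  ∑ p, (1 / 12 : ℝ) • curvPullback (quaternionRightMul (tetrahedralUnit p)) A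

theorem tetrahedralAverage_mem {S : Set M6} (hS : Convex ℝ S)
    (hS_inv : ∀ q : ℍ[ℝ], normSq q = 1 → ∀ R ∈ S, curvPullback (quaternionRightMul q) R ∈ S)
    {A : M6} (hA : A ∈ S) : tetrahedralAverage A ∈ S :=
  hS.sum_mem (fun _ _ => by norm_num) (by norm_num)
    fun p _ => hS_inv _ (normSq_tetrahedralUnit p) A hA

theorem curvForm_tetrahedralAverage (A : M6) (u v : L6) :
    curvForm (tetrahedralAverage A) u v = 1 / 12 * ∑ m, ∑ n,
      curvForm A (wedgeMap (quaternionRightMul (tetrahedralUnit (m, n))) u)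
        (wedgeMap (quaternionRightMul (tetrahedralUnit (m, n))) v) := by
  simp [tetrahedralAverage, Fintype.sum_prod_type, Finset.mul_sum]

theorem wedgeMap_tetrahedralUnit_of_selfDual (p : Fin 4 × Fin 3) {η : L6} (hη : SelfDual η) :
    wedgeMap (quaternionRightMul (tetrahedralUnit p)) η = η := by
  rw [wedgeMap_quaternionRightMul_of_selfDual _ hη, normSq_tetrahedralUnit, one_smul]

theorem wedgeMap_tetrahedralUnit_antiSelfDualOfIm (m : Fin 4) (n a : Fin 3) :
    wedgeMap (quaternionRightMul (tetrahedralUnit (m, n))) (antiSelfDualOfIm (imUnit a)) =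
      kleinSign m a • antiSelfDualOfIm (imUnit (a + n)) := by
  rw [wedgeMap_quaternionRightMul_antiSelfDualOfIm, star_tetrahedralUnit_mul_imUnit_mul, map_smul]

variable (A : M6) {η : L6}

theorem curvForm_tetrahedralAverage_of_selfDual (hη : SelfDual η) {η' : L6} (hη' : SelfDual η') :
    curvForm (tetrahedralAverage A) η η' = curvForm A η η' := by
  simp only [curvForm_tetrahedralAverage, wedgeMap_tetrahedralUnit_of_selfDual _ hη,
    wedgeMap_tetrahedralUnit_of_selfDual _ hη']
  norm_num [← mul_assoc]

theorem curvForm_tetrahedralAverage_selfDual_antiSelfDual (hη : SelfDual η) (a : Fin 3) :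
    curvForm (tetrahedralAverage A) η (antiSelfDualOfIm (imUnit a)) = 0 := by
  simp only [curvForm_tetrahedralAverage, wedgeMap_tetrahedralUnit_of_selfDual _ hη,
    wedgeMap_tetrahedralUnit_antiSelfDualOfIm, map_smul, smul_eq_mul, ← Finset.mul_sum,
    ← Finset.sum_mul, sum_kleinSign, zero_mul, mul_zero]

theorem curvForm_tetrahedralAverage_antiSelfDual_selfDual (hη : SelfDual η) (a : Fin 3) :
    curvForm (tetrahedralAverage A) (antiSelfDualOfIm (imUnit a)) η = 0 := by
  simp only [curvForm_tetrahedralAverage, wedgeMap_tetrahedralUnit_of_selfDual _ hη,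
    wedgeMap_tetrahedralUnit_antiSelfDualOfIm, map_smul, LinearMap.smul_apply, smul_eq_mul,
    ← Finset.mul_sum, ← Finset.sum_mul, sum_kleinSign, zero_mul, mul_zero]

theorem curvForm_tetrahedralAverage_antiSelfDual (a b : Fin 3) :
    curvForm (tetrahedralAverage A) (antiSelfDualOfIm (imUnit a)) (antiSelfDualOfIm (imUnit b)) =
      if a = b then
        (∑ c, curvForm A (antiSelfDualOfIm (imUnit c)) (antiSelfDualOfIm (imUnit c))) / 3
      else 0 := by
  let F (x y : Fin 3) : ℝ := curvForm A (antiSelfDualOfIm (imUnit x)) (antiSelfDualOfIm (imUnit y))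
  have average_eq : curvForm (tetrahedralAverage A) (antiSelfDualOfIm (imUnit a))
      (antiSelfDualOfIm (imUnit b)) =
        1 / 12 * ((∑ m, kleinSign m a * kleinSign m b) * ∑ n, F (a + n) (b + n)) := by
    simp only [curvForm_tetrahedralAverage, wedgeMap_tetrahedralUnit_antiSelfDualOfIm, map_smul,
      LinearMap.smul_apply, smul_eq_mul, Finset.sum_mul_sum, F]
    simp only [mul_left_comm, mul_assoc]
  rw [average_eq, sum_kleinSign_mul_kleinSign]
  split_ifs with hab
  · subst hab
    have sum_shift : ∑ n, F (a + n) (a + n) = ∑ c, F c c :=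
      Equiv.sum_comp (Equiv.addLeft a) fun c => F c c
    rw [sum_shift]
    ring
  · ring

end TetrahedralAverage

section Bianchi

theorem Bianchi.sum_curvForm_hodge {A : M6} (hA : Bianchi A) :
    ∑ k, curvForm A (std6 k) (hodge (std6 k)) = 0 := by
  -- Each off-diagonal entry on the left occurs in two of these four instances.
  have h₀ := hA (std4 1) (std4 2) (std4 3) (std4 0)
  have h₁ := hA (std4 0) (std4 2) (std4 3) (std4 1)
  have h₂ := hA (std4 0) (std4 1) (std4 3) (std4 2)
  have h₃ := hA (std4 0) (std4 1) (std4 2) (std4 3)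
  simp [ip6, appM, std4, wedge, pr, Fin.sum_univ_six] at h₀ h₁ h₂ h₃
  simp [curvForm_apply, ip6, appM, std6, hodge, Fin.sum_univ_six]
  linarith

theorem Bianchi.sum_curvForm_antiSelfDualOfIm {A : M6} (hA : Bianchi A) :
    ∑ a, curvForm A (antiSelfDualOfIm (imUnit a)) (antiSelfDualOfIm (imUnit a)) = scal A / 2 := by
  calc
    _ = ∑ k, A k k - ∑ k, curvForm A (std6 k) (hodge (std6 k)) := by
      simp [curvForm_apply, ip6, appM, antiSelfDualOfIm, imUnit, std6, hodge, Fin.sum_univ_six,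
        Fin.sum_univ_three]
      ring
    _ = scal A / 2 := by
      rw [hA.sum_curvForm_hodge, scal]
      ring

end Bianchi

theorem eq_tetrahedralAverage {A B : M6} (hA : Bianchi A)
    (hBplus : ∀ η : L6, SelfDual η → appM B η = pplus (appM A η))
    (hBminus : ∀ ζ : L6, AntiSelfDual ζ → appM B ζ = (scal A / 12) • ζ) :
    B = tetrahedralAverage A := by
  have form_plus (η v : L6) (hη : SelfDual η) : curvForm B η v = curvForm A η (pplus v) := by
    rw [curvForm_apply, hBplus η hη, ip6_pplus, curvForm_apply]
  have form_minus (a : Fin 3) (v : L6) : curvForm B (antiSelfDualOfIm (imUnit a)) v =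
      scal A / 12 * ip6 (antiSelfDualOfIm (imUnit a)) v := by
    rw [curvForm_apply, hBminus _ (antiSelfDual_antiSelfDualOfIm _)]
    exact smul_dotProduct _ _ v
  refine eq_of_curvForm_blocks_eq (fun η η' hη hη' => ?_) (fun η a hη => ?_) (fun a η hη => ?_)
    fun a b => ?_
  · rw [form_plus η η' hη, hη'.pplus_eq, curvForm_tetrahedralAverage_of_selfDual A hη hη']
  · rw [form_plus η _ hη, (antiSelfDual_antiSelfDualOfIm _).pplus_eq, map_zero,
      curvForm_tetrahedralAverage_selfDual_antiSelfDual A hη]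
  · rw [form_minus, (antiSelfDual_antiSelfDualOfIm _).ip6_eq_zero hη, mul_zero,
      curvForm_tetrahedralAverage_antiSelfDual_selfDual A hη]
  · rw [form_minus, ip6_antiSelfDualOfIm_imUnit, curvForm_tetrahedralAverage_antiSelfDual,
      hA.sum_curvForm_antiSelfDualOfIm]
    split_ifs <;> ring

theorem id_add_weylPlus_component_mem_cone_general {S : Set M6} (hS : Convex ℝ S)
    (hS_inv : ∀ q : ℍ[ℝ], normSq q = 1 → ∀ R ∈ S, curvPullback (quaternionRightMul q) R ∈ S)
    {A : M6} (hA : A ∈ S) (hA_bianchi : Bianchi A) {B : M6}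
    (hBplus : ∀ η : L6, SelfDual η → appM B η = pplus (appM A η))
    (hBminus : ∀ ζ : L6, AntiSelfDual ζ → appM B ζ = (scal A / 12) • ζ) :
    B ∈ S :=
  eq_tetrahedralAverage hA_bianchi hBplus hBminus ▸ tetrahedralAverage_mem hS hS_inv hA

/-- if `R` belongs to an oriented curvature cone `C`, then so
does the operator `R̃ = R_Id + R_{W₊}` acting as `P₊ ∘ R` on `Λ²₊` and as
`scal(R)/12` on `Λ²₋`. -/
theorem id_add_weylPlus_component_mem_cone (C : OrientedCurvatureCone)
    (A : M6) (hA : A ∈ C.carrier) (B : M6)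
    (hBplus : ∀ η : L6, SelfDual η → appM B η = pplus (appM A η))
    (hBminus : ∀ ζ : L6, AntiSelfDual ζ → appM B ζ = (scal A / 12) • ζ) :
    B ∈ C.carrier := by
  exact id_add_weylPlus_component_mem_cone_general C.convex
    (fun _ hq _ hR => C.curvPullback_mem (quaternionRightMul_mem_specialOrthogonalGroup hq) hR)
    hA (C.subset_curvOp A hA).2 hBplus hBminus
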